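/- arXiv:2311.06387 — 3 statements merged into one kernel-verified Lean document; each statement's English description precedes it below -/
import Mathlib

section
/- Let P ⊆ Φ_{B_n} be a signed poset with Fischer order < on ±[n] ∪ {0}, and let a ∈ ±[n]. Write I_≤(a) = {b ∈ ±[n] : b = a or b < a}. Then at least one of the two sets I_≤(a) and I_≤(−a) is isotropic, that is, contains no pair {i, −i} with i ∈ {1,…,n}. -/
open scoped Classical

noncomputable section

/-- Signed index set `±[n]`: `(true, i)` represents `+i`, `(false, i)` represents `-i`. -/
abbrev SIdx (n : ℕ) := Bool × Fin n

/-- Negation `a ↦ -a` on `±[n]`. -/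
def negS {n : ℕ} (a : SIdx n) : SIdx n := (!a.1, a.2)

/-- Standard basis vector `e_i` of `ℝ^n`. -/
def stdB (n : ℕ) (i : Fin n) : Fin n → ℝ := Pi.single i 1

/-- `rsgn true = 1`, `rsgn false = -1`. -/
def rsgn (s : Bool) : ℝ := if s then 1 else -1

/-- `v(a)` for `a ∈ ±[n]`: `v(+i) = e_i`, `v(-i) = -e_i`. -/
def vS {n : ℕ} (a : SIdx n) : Fin n → ℝ := rsgn a.1 • stdB n a.2

/-- `v` on `±[n] ∪ {0}` (with `none` playing the role of `0`). -/
def vO {n : ℕ} : Option (SIdx n) → (Fin n → ℝ)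
  | none => 0
  | some a => vS a

/-- Negation on `±[n] ∪ {0}`, fixing `0`. -/
def negO {n : ℕ} : Option (SIdx n) → Option (SIdx n)
  | none => none
  | some a => some (negS a)

/-- Standard inner product on `ℝ^n`. -/
def dotR {n : ℕ} (x y : Fin n → ℝ) : ℝ := ∑ i, x i * y i

/-- The type `B_n` root system `Φ_{B_n}`. -/
def BnRoots (n : ℕ) : Set (Fin n → ℝ) :=
  {α | (∃ i j : Fin n, i < j ∧ ∃ s t : Bool, α = rsgn s • stdB n i + rsgn t • stdB n j) ∨
    ∃ i : Fin n, ∃ s : Bool, α = rsgn s • stdB n i}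

/-- The positive roots `Φ⁺_{B_n}`. -/
def BnPos (n : ℕ) : Set (Fin n → ℝ) :=
  {α | (∃ i j : Fin n, i < j ∧ ∃ t : Bool, α = stdB n i + rsgn t • stdB n j) ∨
    ∃ i : Fin n, α = stdB n i}

/-- The type `C_n` root system `Φ_{C_n}`. -/
def CnRoots (n : ℕ) : Set (Fin n → ℝ) :=
  {α | (∃ i j : Fin n, i < j ∧ ∃ s t : Bool, α = rsgn s • stdB n i + rsgn t • stdB n j) ∨
    ∃ i : Fin n, ∃ s : Bool, α = (2 * rsgn s) • stdB n i}

/-- Nonnegative real linear combinations of elements of `S`. -/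
def nnSpan {n : ℕ} (S : Set (Fin n → ℝ)) : Set (Fin n → ℝ) :=
  {x | ∃ (r : ℕ) (c : Fin r → ℝ) (β : Fin r → (Fin n → ℝ)),
    (∀ m, 0 ≤ c m) ∧ (∀ m, β m ∈ S) ∧ x = ∑ m, c m • β m}

/-- A signed poset: a subset of `Φ_{B_n}`, antisymmetric and closed under positive
linear combinations remaining in `Φ_{B_n}`. -/
def IsSignedPoset (n : ℕ) (P : Set (Fin n → ℝ)) : Prop :=
  P ⊆ BnRoots n ∧ (∀ α ∈ P, -α ∉ P) ∧ ∀ α ∈ BnRoots n, α ∈ nnSpan P → α ∈ P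

/-- A `C_n`-signed poset. -/
def IsCnSignedPoset (n : ℕ) (Q : Set (Fin n → ℝ)) : Prop :=
  Q ⊆ CnRoots n ∧ (∀ α ∈ Q, -α ∉ Q) ∧ ∀ α ∈ CnRoots n, α ∈ nnSpan Q → α ∈ Q

/-- The root cone `K^rt_P`. -/
def rootCone {n : ℕ} (P : Set (Fin n → ℝ)) : Set (Fin n → ℝ) := nnSpan P

/-- The weight cone `K^wt_P`. -/
def weightCone {n : ℕ} (P : Set (Fin n → ℝ)) : Set (Fin n → ℝ) :=
  {f | ∀ α ∈ P, 0 ≤ dotR f α}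

/-- The Fischer (strict) order on `±[n] ∪ {0}`:
`a < b` iff `v(a) - v(b) ∈ P`, or (`b = -a ≠ 0` and `v(a) ∈ P`). -/
def fLT {n : ℕ} (P : Set (Fin n → ℝ)) (a b : Option (SIdx n)) : Prop :=
  vO a - vO b ∈ P ∨ (a ≠ none ∧ b = negO a ∧ vO a ∈ P)

/-- A subset of `±[n]` is isotropic if it contains no pair `{i, -i}`. -/
def Isotropic {n : ℕ} (J : Finset (SIdx n)) : Prop :=
  ∀ i : Fin n, ¬((true, i) ∈ J ∧ (false, i) ∈ J)

/-- Signed characteristic vector of a subset of `±[n]`. -/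
def chiF {n : ℕ} (J : Finset (SIdx n)) : Fin n → ℝ := fun i =>
  if (true, i) ∈ J then 1 else if (false, i) ∈ J then -1 else 0

/-- `J` is an ideal of the signed poset `P`. -/
def IsIdeal {n : ℕ} (P : Set (Fin n → ℝ)) (J : Finset (SIdx n)) : Prop :=
  Isotropic J ∧ ∀ α ∈ P, 0 ≤ dotR (chiF J) α

/-- Comparability in the Fischer order of `P`. -/
def fComp {n : ℕ} (P : Set (Fin n → ℝ)) (a b : SIdx n) : Prop :=
  fLT P (some a) (some b) ∨ fLT P (some b) (some a)

/-- One step in the comparability graph on a subset `J` of `±[n]`. -/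
def connStep {n : ℕ} (P : Set (Fin n → ℝ)) (J : Finset (SIdx n)) (a b : SIdx n) : Prop :=
  a ∈ J ∧ b ∈ J ∧ fComp P a b

/-- `J` is connected: nonempty, and any two of its elements are joined by a path inside `J`
in the comparability graph of the Fischer order of `P`. -/
def IsConnectedIdl {n : ℕ} (P : Set (Fin n → ℝ)) (J : Finset (SIdx n)) : Prop :=
  J.Nonempty ∧ ∀ a ∈ J, ∀ b ∈ J, Relation.ReflTransGen (connStep P J) a b

/-- A connected ideal of `P`. -/
def IsConnIdeal {n : ℕ} (P : Set (Fin n → ℝ)) (J : Finset (SIdx n)) : Prop :=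
  IsIdeal P J ∧ IsConnectedIdl P J

/-- Support `supp J = {|a| : a ∈ J}`. -/
def suppF {n : ℕ} (J : Finset (SIdx n)) : Finset (Fin n) := J.image Prod.snd

/-- `J` and `K` intersect nontrivially. -/
def NontrivInter {n : ℕ} (J K : Finset (SIdx n)) : Prop :=
  (suppF J ∩ suppF K).Nonempty ∧ ¬J ⊆ K ∧ ¬K ⊆ J

/-- `J` and `K` intersect trivially. -/
def TrivInter {n : ℕ} (J K : Finset (SIdx n)) : Prop := ¬NontrivInter J K

/-- A signed permutation, as an anti-symmetric bijection of `±[n]`. -/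
def IsSPerm {n : ℕ} (w : SIdx n ≃ SIdx n) : Prop := ∀ a, w (negS a) = negS (w a)

/-- Linear action of a signed permutation on `ℝ^n`, determined by `w(e_i) = v(w(+i))`. -/
def spAct {n : ℕ} (w : SIdx n ≃ SIdx n) (x : Fin n → ℝ) : Fin n → ℝ :=
  ∑ i, x i • vS (w (true, i))

/-- `w` is a linear extension of `P`: a signed permutation with `P ⊆ w(Φ⁺_{B_n})`. -/
def IsLinExt {n : ℕ} (P : Set (Fin n → ℝ)) (w : SIdx n ≃ SIdx n) : Prop :=
  IsSPerm w ∧ ∀ α ∈ P, ∃ β ∈ BnPos n, α = spAct w β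

/-- The (finite) set `𝓛(P)` of linear extensions of `P`. -/
def linExts (n : ℕ) (P : Set (Fin n → ℝ)) : Finset (SIdx n ≃ SIdx n) :=
  Finset.univ.filter (IsLinExt P)

/-- Simple roots of `Φ_{B_n}`: `α_i = e_i - e_{i+1}` for `i < n - 1`, `α_{n-1} = e_{n-1}`
(0-indexed). -/
def simpleRoot (n : ℕ) (i : Fin n) : Fin n → ℝ := fun j =>
  (if j = i then (1 : ℝ) else 0) - if (j : ℕ) = (i : ℕ) + 1 then 1 else 0

/-- `J^w_m = {w(1), …, w(m)}` (0-indexed: the images under `w` of `+1, …, +(m+1)`). -/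
def JwSet {n : ℕ} (w : SIdx n ≃ SIdx n) (m : Fin n) : Finset (SIdx n) :=
  (Finset.univ.filter (fun j : Fin n => j ≤ m)).image (fun j => w (true, j))

/-- An extensible ideal of `P`. -/
def Extensible (n : ℕ) (P : Set (Fin n → ℝ)) (J : Finset (SIdx n)) : Prop :=
  ∃ I : Finset (SIdx n), I.Nonempty ∧ Disjoint I J ∧
    IsIdeal P (J ∪ I) ∧ IsIdeal P (J ∪ I.image negS)

/-- The finite set `J_conn(P)` of connected ideals of `P`. -/
def JconnF (n : ℕ) (P : Set (Fin n → ℝ)) : Finset (Finset (SIdx n)) :=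
  Finset.univ.filter (IsConnIdeal P)

/-- Membership in `Π(P)`: an unordered pair of nontrivially intersecting connected ideals. -/
def inPiP {n : ℕ} (P : Set (Fin n → ℝ)) (p : Sym2 (Finset (SIdx n))) : Prop :=
  ∃ J K : Finset (SIdx n),
    p = s(J, K) ∧ IsConnIdeal P J ∧ IsConnIdeal P K ∧ NontrivInter J K

/-- The finite set `Π(P)` of unordered pairs of nontrivially intersecting connected ideals. -/
def PiP (n : ℕ) (P : Set (Fin n → ℝ)) : Finset (Sym2 (Finset (SIdx n))) :=
  Finset.univ.filter (inPiP P)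

/-- No connected ideal of `P` intersects two or more other connected ideals nontrivially. -/
def NoDoubleNontriv (n : ℕ) (P : Set (Fin n → ℝ)) : Prop :=
  ∀ J K K' : Finset (SIdx n), IsConnIdeal P J → IsConnIdeal P K → IsConnIdeal P K' →
    NontrivInter J K → NontrivInter J K' → K = K'

/-- The connected component of `a` inside `J` (w.r.t. the Fischer comparability graph). -/
def componentIn {n : ℕ} (P : Set (Fin n → ℝ)) (J : Finset (SIdx n)) (a : SIdx n) :
    Finset (SIdx n) :=
  J.filter (fun b => Relation.ReflTransGen (connStep P J) a b)

/-- The set of connected components of `J`. -/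
def componentsOf {n : ℕ} (P : Set (Fin n → ℝ)) (J : Finset (SIdx n)) :
    Finset (Finset (SIdx n)) :=
  J.image (componentIn P J)

/-- The signed support `supp±(f) = {sgn(f_i)·i : f_i ≠ 0}` of a vector `f ∈ ℝ^n`. -/
def suppPM {n : ℕ} (f : Fin n → ℝ) : Finset (SIdx n) :=
  Finset.univ.filter (fun a : SIdx n => if a.1 then 0 < f a.2 else f a.2 < 0)

/-- Index type for the variables `U_J`, `J` a connected ideal of `P`. -/
abbrev ConnIdx (n : ℕ) (P : Set (Fin n → ℝ)) := {J : Finset (SIdx n) // IsConnIdeal P J}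

/-- Integer signed characteristic vector, as an exponent vector for Laurent monomials. -/
def chiZ {n : ℕ} (J : Finset (SIdx n)) : Fin n →₀ ℤ :=
  Finsupp.equivFunOnFinite.symm (fun i =>
    if (true, i) ∈ J then 1 else if (false, i) ∈ J then -1 else 0)

/-- The map `φ : k[U_J : J ∈ J_conn(P)] → k[x_1^{±1}, …, x_n^{±1}]`, `U_J ↦ x^{χ_J}`. -/
def phiWt (n : ℕ) (P : Set (Fin n → ℝ)) (k : Type) [Field k] :
    MvPolynomial (ConnIdx n P) k →ₐ[k] AddMonoidAlgebra k (Fin n →₀ ℤ) :=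
  MvPolynomial.aeval (fun J => AddMonoidAlgebra.single (chiZ J.val) 1)

/-- The binomial `syz(U_J, U_K) = U_J U_K - (∏_A U_A) (∏_B U_B)`, where `A` runs over the
connected components of `J ∩ K` and `B` over the connected components of `supp±(χ_J + χ_K)`. -/
def syzPoly (n : ℕ) (P : Set (Fin n → ℝ)) (k : Type) [Field k] (J K : ConnIdx n P) :
    MvPolynomial (ConnIdx n P) k :=
  MvPolynomial.X J * MvPolynomial.X K -
    (∏ A ∈ Finset.univ.filter
        (fun A : ConnIdx n P => (A : Finset (SIdx n)) ∈ componentsOf P (J.val ∩ K.val)),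
        MvPolynomial.X A) *
      ∏ B ∈ Finset.univ.filter
        (fun B : ConnIdx n P =>
          (B : Finset (SIdx n)) ∈ componentsOf P (suppPM (chiF J.val + chiF K.val))),
        MvPolynomial.X B

/-- `θ_1, …, θ_r` is a regular sequence: the ideal it generates is proper, and each `θ_{m+1}`
is a non-zero-divisor modulo the ideal generated by `θ_1, …, θ_m`. -/
def IsRegSeq {R : Type} [CommRing R] {r : ℕ} (θ : Fin r → R) : Prop :=
  Ideal.span (Set.range θ) ≠ ⊤ ∧
    ∀ (m : ℕ) (hm : m < r) (x : R),
      θ ⟨m, hm⟩ * x ∈ Ideal.span (θ '' {j : Fin r | (j : ℕ) < m}) →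
        x ∈ Ideal.span (θ '' {j : Fin r | (j : ℕ) < m})

/-- The induced signed poset `P_A = P ∩ span_ℝ{e_i : i ∈ A}`. -/
def inducedPoset (n : ℕ) (P : Set (Fin n → ℝ)) (A : Finset (Fin n)) : Set (Fin n → ℝ) :=
  {α | α ∈ P ∧ α ∈ Submodule.span ℝ (stdB n '' (A : Set (Fin n)))}

/-- The major index of a signed permutation. -/
def majB {n : ℕ} (w : SIdx n ≃ SIdx n) : ℕ :=
  ∑ i ∈ Finset.univ.filter
      (fun i : Fin n => spAct w (simpleRoot n i) ∉ BnPos n), ((i : ℕ) + 1)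

/-- `[m]_q = 1 + q + ⋯ + q^{m-1}` in `ℤ[q]`. -/
def qInt (m : ℕ) : Polynomial ℤ := ∑ t ∈ Finset.range m, Polynomial.X ^ t

/-- The symmetric function `{J, K} ↦ ⟨x, χ_J + χ_K⟩` on unordered pairs. -/
def pairDot {n : ℕ} (x : Fin n → ℝ) : Sym2 (Finset (SIdx n)) → ℝ :=
  Sym2.lift ⟨fun J K => dotR x (chiF J + chiF K),
    fun J K => congrArg (dotR x) (add_comm (chiF J) (chiF K))⟩

/-- The symmetric function `{J, K} ↦ [|J| + |K|]_q` on unordered pairs. -/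
def pairQ {n : ℕ} : Sym2 (Finset (SIdx n)) → Polynomial ℤ :=
  Sym2.lift ⟨fun J K => qInt (J.card + K.card),
    fun J K => congrArg qInt (Nat.add_comm J.card K.card)⟩

/-- The principal order ideal `I_≤(a)` in the Fischer order restricted to `±[n]`. -/
def Ile {n : ℕ} (P : Set (Fin n → ℝ)) (a : SIdx n) : Set (SIdx n) :=
  {b | b = a ∨ fLT P (some b) (some a)}

/-- A set of signed indices is isotropic if it contains no pair `{i, -i}`. -/
def IsoSet {n : ℕ} (S : Set (SIdx n)) : Prop :=
  ∀ i : Fin n, ¬((true, i) ∈ S ∧ (false, i) ∈ S)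

/-- A covering pair of the Fischer order of `P`. -/
def CovPair {n : ℕ} (P : Set (Fin n → ℝ)) (a b : Option (SIdx n)) : Prop :=
  fLT P a b ∧ ¬∃ c : Option (SIdx n), fLT P a c ∧ fLT P c b

/-- The set of covering roots of `P`. -/
def covRoots {n : ℕ} (P : Set (Fin n → ℝ)) : Set (Fin n → ℝ) :=
  {x | ∃ a b : Option (SIdx n), CovPair P a b ∧ x = vO a - vO b}

/-- The set `J_ε = {i : ε_i = 1} ∪ {-i : ε_i = -1}` attached to a `{-1,0,1}`-vector. -/
def Jeps {n : ℕ} (ε : Fin n → ℝ) : Set (SIdx n) :=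
  {a | (a.1 = true ∧ ε a.2 = 1) ∨ (a.1 = false ∧ ε a.2 = -1)}

theorem nnSpan_add {n : ℕ} {S : Set (Fin n → ℝ)} {x y : Fin n → ℝ}
    (hx : x ∈ nnSpan S) (hy : y ∈ nnSpan S) : x + y ∈ nnSpan S := by
  obtain ⟨r, c, β, hc, hβ, rfl⟩ := hx
  obtain ⟨r', c', β', hc', hβ', rfl⟩ := hy
  refine ⟨r + r', Fin.append c c', Fin.append β β', ?_, ?_, ?_⟩
  · intro m
    refine Fin.addCases (fun i => ?_) (fun i => ?_) m
    · simpa using hc i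
    · simpa using hc' i
  · intro m
    refine Fin.addCases (fun i => ?_) (fun i => ?_) m
    · simpa using hβ i
    · simpa using hβ' i
  · simp [Fin.sum_univ_add]

theorem nnSpan_smul_mem {n : ℕ} {S : Set (Fin n → ℝ)} {x : Fin n → ℝ} (t : ℝ) (ht : 0 ≤ t)
    (hx : x ∈ S) : t • x ∈ nnSpan S :=
  ⟨1, fun _ => t, fun _ => x, fun _ => ht, fun _ => hx, by simp⟩

theorem nnSpan_zero {n : ℕ} {S : Set (Fin n → ℝ)} : (0 : Fin n → ℝ) ∈ nnSpan S :=
  ⟨0, fun _ => 0, fun _ => 0, fun m => m.elim0, fun m => m.elim0, by simp⟩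

theorem vS_negS {n : ℕ} (a : SIdx n) : vS (negS a) = -vS a := by
  obtain ⟨s, i⟩ := a
  cases s <;> simp [vS, negS, rsgn]

theorem half_mem {n : ℕ} {P : Set (Fin n → ℝ)} {a b : SIdx n} (h : b ∈ Ile P a) :
    (1 / 2 : ℝ) • (vS b - vS a) ∈ nnSpan P := by
  rcases h with rfl | h | ⟨-, h, hb⟩
  · simpa using nnSpan_zero
  · exact nnSpan_smul_mem _ (by norm_num) h
  · have h' : a = negS b := Option.some.inj h
    have e : (1 / 2 : ℝ) • (vS b - vS a) = (1 : ℝ) • vS b := by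
      rw [h', vS_negS]
      module
    rw [e]
    exact nnSpan_smul_mem _ (by norm_num) hb

theorem neg_mem_of_not_iso {n : ℕ} {P : Set (Fin n → ℝ)} (hP : IsSignedPoset n P) (a : SIdx n)
    (h : ¬ IsoSet (Ile P a)) : -vS a ∈ P := by
  unfold IsoSet at h
  push Not at h
  obtain ⟨i, h1, h2⟩ := h
  apply hP.2.2
  · refine Or.inr ⟨a.2, !a.1, ?_⟩
    rw [← vS_negS]
    rfl
  · have e : -vS a = (1 / 2 : ℝ) • (vS (true, i) - vS a) +
        (1 / 2 : ℝ) • (vS (false, i) - vS a) := by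
      have : vS (false, i) = -vS (true, i) := vS_negS (true, i)
      rw [this]
      module
    rw [e]
    exact nnSpan_add (half_mem h1) (half_mem h2)

theorem statement_8 (n : ℕ) (hn : 1 ≤ n) (P : Set (Fin n → ℝ)) (hP : IsSignedPoset n P)
    (a : SIdx n) :
    IsoSet (Ile P a) ∨ IsoSet (Ile P (negS a)) := by
  by_contra hcon
  push Not at hcon
  have h1 := neg_mem_of_not_iso hP a hcon.1
  have h2 := neg_mem_of_not_iso hP (negS a) hcon.2
  rw [vS_negS] at h2
  exact hP.2.1 _ h1 h2
end
end

section
/- Let P ⊆ Φ_{B_n} be a signed poset, let f ∈ ℝ^n satisfy ⟨f, α⟩ ≥ 0 for all α ∈ P, and let c > 0. Define ε ∈ {−1,0,1}^n by ε_i = 1 if f_i ≥ c, ε_i = −1 if f_i ≤ −c, and ε_i = 0 otherwise. Then ⟨ε, α⟩ ≥ 0 for all α ∈ P; equivalently, the set J = {sgn(f_i)·i : 1 ≤ i ≤ n, |f_i| ≥ c} is an ideal of P. -/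
open scoped Classical

noncomputable section

theorem dotR_pair13 {n : ℕ} (x : Fin n → ℝ) (i j : Fin n) (s t : ℝ) :
    dotR x (s • stdB n i + t • stdB n j) = s * x i + t * x j := by
  simp [dotR, stdB, mul_add, Finset.sum_add_distrib, Pi.single_apply]
  ring

theorem dotR_one13 {n : ℕ} (x : Fin n → ℝ) (i : Fin n) (s : ℝ) :
    dotR x (s • stdB n i) = s * x i := by
  simp [dotR, stdB, Pi.single_apply]
  ring

theorem statement_13 (n : ℕ) (hn : 1 ≤ n) (P : Set (Fin n → ℝ)) (hP : IsSignedPoset n P)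
    (f : Fin n → ℝ) (hf : ∀ α ∈ P, 0 ≤ dotR f α) (c : ℝ) (hc : 0 < c) :
    (∀ α ∈ P,
      0 ≤ dotR (fun i => if c ≤ f i then (1 : ℝ) else if f i ≤ -c then -1 else 0) α) ∧
    IsIdeal P
      (Finset.univ.filter (fun a : SIdx n => if a.1 then c ≤ f a.2 else f a.2 ≤ -c)) := by
  have key : ∀ α ∈ P,
      0 ≤ dotR (fun i => if c ≤ f i then (1 : ℝ) else if f i ≤ -c then -1 else 0) α := by
    intro α hα
    have h := hf α hα
    rcases hP.1 hα with ⟨i, j, -, s, t, rfl⟩ | ⟨i, s, rfl⟩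
    · rw [dotR_pair13] at h ⊢
      cases s <;> cases t <;> simp only [rsgn] at h ⊢ <;> norm_num at h ⊢ <;>
        split_ifs <;> first | linarith | norm_num
    · rw [dotR_one13] at h ⊢
      cases s <;> simp only [rsgn] at h ⊢ <;> norm_num at h ⊢ <;>
        split_ifs <;> first | linarith | norm_num
  refine ⟨key, ?_, ?_⟩
  · rintro i ⟨h1, h2⟩
    simp at h1 h2
    linarith
  · intro α hα
    convert key α hα using 2
    funext i
    simp [chiF]
end
end

section
/- Let P ⊆ Φ_{B_n} be a signed poset and let f ∈ ℤ^n be a P-partition. Then there exist k ≥ 0 and ideals J_1 ⊇ J_2 ⊇ ⋯ ⊇ J_k of P (as subsets of ±[n]) such that f = χ_{J_1} + χ_{J_2} + ⋯ + χ_{J_k}. -/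
open scoped Classical

noncomputable section

/-- The `m`-th level of an integer: `1`, `-1` or `0`. -/
def lev (m : ℕ) (x : ℤ) : ℝ := if (m : ℤ) < x then 1 else if x < -(m : ℤ) then -1 else 0

/-- The level sets of `f`. -/
def levJ {n : ℕ} (f : Fin n → ℤ) (m : ℕ) : Finset (SIdx n) :=
  Finset.univ.filter (fun a : SIdx n => (m : ℤ) < (if a.1 then f a.2 else - f a.2))

lemma chiF_levJ {n : ℕ} (f : Fin n → ℤ) (m : ℕ) (i : Fin n) :
    chiF (levJ f m) i = lev m (f i) := by
  have h : ((m : ℤ) < - f i) ↔ (f i < -(m : ℤ)) := by omega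
  simp [chiF, levJ, lev, h]

lemma dotR_single {n : ℕ} (x : Fin n → ℝ) (s : Bool) (i : Fin n) :
    dotR x (rsgn s • stdB n i) = rsgn s * x i := by
  simp [dotR, stdB, Pi.single_apply, mul_comm]

lemma dotR_add' {n : ℕ} (x y z : Fin n → ℝ) : dotR x (y + z) = dotR x y + dotR x z := by
  simp [dotR, mul_add, Finset.sum_add_distrib]

lemma lev_mono (m : ℕ) {x y : ℤ} (h : x ≤ y) : lev m x ≤ lev m y := by
  unfold lev
  split_ifs <;> first | omega | norm_num

lemma lev_neg (m : ℕ) (x : ℤ) : lev m (-x) = - lev m x := by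
  unfold lev
  split_ifs <;> first | omega | norm_num

lemma lev_zero (m : ℕ) : lev m 0 = 0 := by
  unfold lev
  split_ifs <;> first | omega | norm_num

lemma sum_lev_nonneg (r k : ℕ) (h : k ≤ r) : ∑ m ∈ Finset.range r, lev m (k : ℤ) = k := by
  have h1 : ∀ m ∈ Finset.range r, lev m (k : ℤ) = if m < k then (1 : ℝ) else 0 := by
    intro m _
    unfold lev
    split_ifs <;> first | omega | rfl
  rw [Finset.sum_congr rfl h1, ← Finset.sum_filter]
  have h2 : (Finset.range r).filter (fun m => m < k) = Finset.range k := by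
    ext m; simp; omega
  rw [h2]; simp

lemma sum_lev (r : ℕ) (x : ℤ) (h : x.natAbs ≤ r) : ∑ m ∈ Finset.range r, lev m x = x := by
  have h0 := sum_lev_nonneg r x.natAbs h
  rcases Int.natAbs_eq x with hx | hx
  · rw [← hx] at h0
    rw [h0]
    have h4 := congrArg (Int.cast : ℤ → ℝ) hx
    rw [Int.cast_natCast] at h4
    exact h4.symm
  · have h3 : ∀ m ∈ Finset.range r, lev m x = - lev m (x.natAbs : ℤ) := by
      intro m _
      rw [← lev_neg, ← hx]
    rw [Finset.sum_congr rfl h3, Finset.sum_neg_distrib, h0]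
    exact_mod_cast hx.symm

lemma rsgn_lev (m : ℕ) (s : Bool) (x : ℤ) :
    rsgn s * lev m x = lev m ((if s then 1 else -1) * x) := by
  cases s <;> simp [rsgn, lev_neg]

lemma rsgn_cast (s : Bool) (x : ℤ) :
    rsgn s * (x : ℝ) = (((if s then 1 else -1) * x : ℤ) : ℝ) := by
  cases s <;> simp [rsgn]

lemma levJ_ideal {n : ℕ} (P : Set (Fin n → ℝ)) (hP : IsSignedPoset n P)
    (f : Fin n → ℤ) (hf : ∀ α ∈ P, 0 ≤ dotR (fun i => (f i : ℝ)) α) (m : ℕ) :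
    IsIdeal P (levJ f m) := by
  refine ⟨fun i => ?_, fun α hα => ?_⟩
  · simp [levJ]
    omega
  · have h := hf α hα
    rcases hP.1 hα with ⟨i, j, _, s, t, rfl⟩ | ⟨i, s, rfl⟩
    · rw [dotR_add', dotR_single, dotR_single, rsgn_cast, rsgn_cast] at h
      rw [dotR_add', dotR_single, dotR_single, chiF_levJ, chiF_levJ, rsgn_lev, rsgn_lev]
      have h' := lev_mono m (show -((if s then 1 else -1) * f i) ≤ (if t then 1 else -1) * f j by
        have : (0 : ℤ) ≤ (if s then 1 else -1) * f i + (if t then 1 else -1) * f j := by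
          exact_mod_cast h
        linarith)
      rw [lev_neg] at h'
      linarith
    · rw [dotR_single, rsgn_cast] at h
      rw [dotR_single, chiF_levJ, rsgn_lev, ← lev_zero m]
      exact lev_mono m (by exact_mod_cast h)

theorem statement_14 (n : ℕ) (hn : 1 ≤ n) (P : Set (Fin n → ℝ)) (hP : IsSignedPoset n P)
    (f : Fin n → ℤ) (hf : ∀ α ∈ P, 0 ≤ dotR (fun i => (f i : ℝ)) α) :
    ∃ (r : ℕ) (J : Fin r → Finset (SIdx n)),
      (∀ m, IsIdeal P (J m)) ∧
      (∀ m m' : Fin r, m ≤ m' → J m' ⊆ J m) ∧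
      (fun i => (f i : ℝ)) = ∑ m, chiF (J m) := by
  refine ⟨∑ i, (f i).natAbs, fun m => levJ f m, fun m => levJ_ideal P hP f hf m, ?_, ?_⟩
  · intro m m' hm a
    have : (m : ℕ) ≤ m' := hm
    simp only [levJ, Finset.mem_filter, Finset.mem_univ, true_and]
    omega
  · funext i
    rw [Finset.sum_apply]
    simp only [chiF_levJ]
    rw [Fin.sum_univ_eq_sum_range (fun m => lev m (f i)), sum_lev]
    exact Finset.single_le_sum (f := fun i => (f i).natAbs) (fun _ _ => Nat.zero_le _)
      (Finset.mem_univ i)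
end
end
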